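/- arXiv:1808.06291 — 2 statements merged into one kernel-verified Lean document; each statement's English description precedes it below -/
import Mathlib

section
/- Let λ be a bipartition (2-partition) of n. Then w(λ) = w(λ'), i.e. the weight of λ equals the weight of its conjugate bipartition. Equivalently, avoiding the factor 1/2: 2·(Σ_{s=1}^{2} c_{Q_s}(λ)) − Σ_{f∈K^×} (c_f(λ) − c_{qf}(λ))² = 2·(Σ_{s=1}^{2} c_{Q_s}(λ')) − Σ_{f∈K^×} (c_f(λ') − c_{qf}(λ'))². -/
open scoped BigOperators

/-- `lam : ℕ → ℕ` encodes a partition: row `i` (0-indexed) has `lam i` boxes.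
It must be non-increasing with finitely many nonzero parts. -/
def IsPartitionFun (lam : ℕ → ℕ) : Prop :=
  (∀ ⦃i j : ℕ⦄, i ≤ j → lam j ≤ lam i) ∧ ∃ N : ℕ, ∀ i, N ≤ i → lam i = 0

/-- The size `|λ|` of a partition. -/
noncomputable def partSize (lam : ℕ → ℕ) : ℕ := ∑ᶠ i, lam i

/-- The conjugate partition: `(conjParts lam) j = #{i : lam i ≥ j+1}`
(column `j`, 0-indexed, has as many boxes as there are rows of length `> j`). -/
noncomputable def conjParts (lam : ℕ → ℕ) : ℕ → ℕ :=
  fun j => Set.ncard {i : ℕ | j < lam i}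

/-- An `r`-partition (multipartition) is an `r`-tuple of partitions. -/
def IsMultipartition {r : ℕ} (lam : Fin r → ℕ → ℕ) : Prop :=
  ∀ k, IsPartitionFun (lam k)

/-- The size of an `r`-partition. -/
noncomputable def msize {r : ℕ} (lam : Fin r → ℕ → ℕ) : ℕ :=
  ∑ k : Fin r, partSize (lam k)

/-- The conjugate of an `r`-partition `λ = (λ⁽¹⁾, …, λ⁽ʳ⁾)` is
`λ' = (λ⁽ʳ⁾', …, λ⁽¹⁾')`. -/
noncomputable def mconj {r : ℕ} (lam : Fin r → ℕ → ℕ) : Fin r → ℕ → ℕ :=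
  fun k => conjParts (lam k.rev)

/-- Dominance order on `r`-partitions:
`λ ⊵ μ` iff for every component `s` and every `j ≥ 1`,
`Σ_{t<s} |λ⁽ᵗ⁾| + Σ_{i=1}^{j} λ⁽ˢ⁾ᵢ ≥ Σ_{t<s} |μ⁽ᵗ⁾| + Σ_{i=1}^{j} μ⁽ˢ⁾ᵢ`. -/
def mDominates {r : ℕ} (lam mu : Fin r → ℕ → ℕ) : Prop :=
  ∀ (s : Fin r) (j : ℕ),
    ((∑ t ∈ Finset.univ.filter (fun t : Fin r => t < s), partSize (mu t)) +
      ∑ i ∈ Finset.range (j + 1), mu s i) ≤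
    ((∑ t ∈ Finset.univ.filter (fun t : Fin r => t < s), partSize (lam t)) +
      ∑ i ∈ Finset.range (j + 1), lam s i)

/-- The Young diagram of an `r`-partition: nodes `(i, j, k)` (all 0-indexed)
with `j < λ⁽ᵏ⁾ᵢ`. -/
def mDiagram {r : ℕ} (lam : Fin r → ℕ → ℕ) : Set (ℕ × ℕ × Fin r) :=
  {x | x.2.1 < lam x.2.2 x.1}

/-- The residue of the node `(i, j, k)` with respect to `(q, Q)` is
`q^(j-i) * Q k` (0-indexed `i, j`, which gives the same value as 1-indexing). -/
noncomputable def res {r : ℕ} {K : Type*} [Field K] (q : K) (Q : Fin r → K)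
    (x : ℕ × ℕ × Fin r) : K :=
  q ^ ((x.2.1 : ℤ) - (x.1 : ℤ)) * Q x.2.2

/-- `resCount q Q lam f = c_f(λ)`, the number of nodes of `[λ]` of residue `f`. -/
noncomputable def resCount {r : ℕ} {K : Type*} [Field K] (q : K) (Q : Fin r → K)
    (lam : Fin r → ℕ → ℕ) (f : K) : ℕ :=
  Set.ncard {x ∈ mDiagram lam | res q Q x = f}

/-- Fayers' weight of an `r`-partition:
`w(λ) = (Σ_{k} c_{Q_k}(λ)) - (1/2) Σ_{f ∈ K^×} (c_f(λ) - c_{qf}(λ))²`. -/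
noncomputable def mweight {r : ℕ} {K : Type*} [Field K] (q : K) (Q : Fin r → K)
    (lam : Fin r → ℕ → ℕ) : ℚ :=
  (∑ k : Fin r, (resCount q Q lam (Q k) : ℚ)) -
    (1 / 2) * ∑ᶠ f ∈ {f : K | f ≠ 0},
      (((resCount q Q lam f : ℤ) - (resCount q Q lam (q * f) : ℤ)) : ℚ) ^ 2

/-! Transposing nodes, `(i, j, k) ↦ (j, i, r + 1 - k)`, carries `[λ]` onto `[λ']`. If
`Q k * Q' (r + 1 - k) = P` for all `k`, a node and its transpose have residues, for `Q` and `Q'`,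
with product `P`. Hence `λ'` has as many nodes of `Q'`-residue `P / f` as `λ` has of `Q`-residue
`f`, and both sums in the weight are preserved: the first under `k ↦ r + 1 - k`, the second under
`f ↦ P / (q * f)`, which exchanges the two terms of each difference. For `r = 2` the condition
holds with `Q' = Q` and `P = Q₁ Q₂`. -/

theorem lt_ncard_iff_mem_of_isLowerSet {s : Set ℕ} (hs : IsLowerSet s) (hfin : s.Finite)
    {i : ℕ} : i < s.ncard ↔ i ∈ s := by
  constructor
  · contrapose!
    intro hi
    have hsub : s ⊆ Set.Iio i := fun j hj => not_le.mp fun hij => hi (hs hij hj)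
    simpa using Set.ncard_le_ncard hsub
  · intro hi
    have hsub : Set.Iio (i + 1) ⊆ s := fun j hj => hs (Nat.le_of_lt_succ hj) hi
    simpa using Set.ncard_le_ncard hsub hfin

theorem IsPartitionFun.lt_conjParts_iff {lam : ℕ → ℕ} (hlam : IsPartitionFun lam) {i j : ℕ} :
    i < conjParts lam j ↔ j < lam i := by
  obtain ⟨hanti, N, hN⟩ := hlam
  have hlower : IsLowerSet {i | j < lam i} := fun _ _ hle hlt => hlt.trans_le (hanti hle)
  have hfin : {i | j < lam i}.Finite := (Set.finite_Iio N).subset fun i hi =>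
    not_le.mp fun hNi => Nat.not_lt_zero j (hN i hNi ▸ hi)
  exact lt_ncard_iff_mem_of_isLowerSet hlower hfin

/-- The bijection `(i, j, k) ↦ (j, i, r + 1 - k)` on nodes underlying conjugation of
`r`-partitions; in the 0-indexed encoding, `r + 1 - k` is `k.rev`. -/
def nodeTranspose (r : ℕ) : Equiv.Perm (ℕ × ℕ × Fin r) where
  toFun x := (x.2.1, x.1, x.2.2.rev)
  invFun x := (x.2.1, x.1, x.2.2.rev)
  left_inv x := by simp
  right_inv x := by simp

section

variable {r : ℕ} {lam : Fin r → ℕ → ℕ}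

theorem mem_mDiagram_mconj (hlam : IsMultipartition lam) (x : ℕ × ℕ × Fin r) :
    x ∈ mDiagram (mconj lam) ↔ nodeTranspose r x ∈ mDiagram lam :=
  (hlam x.2.2.rev).lt_conjParts_iff

variable {K : Type*} [Field K] {q P : K} {Q Q' : Fin r → K}

theorem res_nodeTranspose_mul_res (hq : q ≠ 0) (hQ : ∀ k, Q k * Q' k.rev = P)
    (x : ℕ × ℕ × Fin r) : res q Q (nodeTranspose r x) * res q Q' x = P := by
  obtain ⟨i, j, k⟩ := x
  calc q ^ ((i : ℤ) - j) * Q k.rev * (q ^ ((j : ℤ) - i) * Q' k)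
      = q ^ ((i : ℤ) - j) * q ^ ((j : ℤ) - i) * (Q k.rev * Q' k.rev.rev) := by
        rw [Fin.rev_rev, mul_mul_mul_comm]
    _ = P := by rw [← zpow_add₀ hq, hQ]; simp

theorem resCount_mconj (hq : q ≠ 0) (hP : P ≠ 0) (hQ : ∀ k, Q k * Q' k.rev = P)
    (hlam : IsMultipartition lam) {f g : K} (hfg : f * g = P) :
    resCount q Q' (mconj lam) g = resCount q Q lam f := by
  have hres (x : ℕ × ℕ × Fin r) : res q Q' x = g ↔ res q Q (nodeTranspose r x) = f := by
    have hmul := res_nodeTranspose_mul_res hq hQ x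
    constructor
    · rintro rfl
      exact mul_right_cancel₀ (right_ne_zero_of_mul (hfg ▸ hP)) (hmul.trans hfg.symm)
    · rintro rfl
      exact mul_left_cancel₀ (left_ne_zero_of_mul (hfg ▸ hP)) (hmul.trans hfg.symm)
  have hpreimage : {x ∈ mDiagram (mconj lam) | res q Q' x = g} =
      nodeTranspose r ⁻¹' {x ∈ mDiagram lam | res q Q x = f} :=
    Set.ext fun x => and_congr (mem_mDiagram_mconj hlam x) (hres x)
  rw [resCount, resCount, hpreimage, Set.ncard_preimage_of_injective_subset_range
    (nodeTranspose r).injective (by simp)]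

theorem sum_resCount_mconj (hq : q ≠ 0) (hP : P ≠ 0) (hQ : ∀ k, Q k * Q' k.rev = P)
    (hlam : IsMultipartition lam) :
    ∑ k, resCount q Q' (mconj lam) (Q' k) = ∑ k, resCount q Q lam (Q k) := by
  rw [← Equiv.sum_comp Fin.revPerm]
  exact Finset.sum_congr rfl fun k _ => resCount_mconj hq hP hQ hlam (hQ k)

theorem bijOn_div_mul_ne_zero (hq : q ≠ 0) (hP : P ≠ 0) :
    Set.BijOn (fun f => P / (q * f)) {f | f ≠ 0} {f | f ≠ 0} := by
  have hmaps : Set.MapsTo (fun f => P / (q * f)) {f | f ≠ 0} {f | f ≠ 0} :=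
    fun f hf => div_ne_zero hP (mul_ne_zero hq hf)
  have hinv : Set.LeftInvOn (fun f => P / (q * f)) (fun f => P / (q * f)) {f | f ≠ 0} := by
    intro f (hf : f ≠ 0)
    field_simp
  exact Set.InvOn.bijOn ⟨hinv, hinv⟩ hmaps hmaps

theorem finsum_sq_resCount_sub_mconj (hq : q ≠ 0) (hP : P ≠ 0) (hQ : ∀ k, Q k * Q' k.rev = P)
    (hlam : IsMultipartition lam) :
    ∑ᶠ f ∈ {f : K | f ≠ 0},
        (((resCount q Q' (mconj lam) f : ℤ) -
          (resCount q Q' (mconj lam) (q * f) : ℤ)) : ℚ) ^ 2 =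
      ∑ᶠ f ∈ {f : K | f ≠ 0},
        (((resCount q Q lam f : ℤ) - (resCount q Q lam (q * f) : ℤ)) : ℚ) ^ 2 := by
  refine finsum_mem_eq_of_bijOn _ (bijOn_div_mul_ne_zero hq hP) fun f (hf : f ≠ 0) => ?_
  have hleft : resCount q Q' (mconj lam) f = resCount q Q lam (q * (P / (q * f))) :=
    resCount_mconj hq hP hQ hlam (by field_simp)
  have hright : resCount q Q' (mconj lam) (q * f) = resCount q Q lam (P / (q * f)) :=
    resCount_mconj hq hP hQ hlam (by field_simp)
  rw [hleft, hright, sub_sq_comm]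

theorem weight_conj_bipartition_general (hq : q ≠ 0) (hP : P ≠ 0)
    (hQ : ∀ k, Q k * Q' k.rev = P) (hlam : IsMultipartition lam) :
    mweight q Q lam = mweight q Q' (mconj lam) := by
  simp only [mweight, ← Nat.cast_sum]
  rw [sum_resCount_mconj hq hP hQ hlam, finsum_sq_resCount_sub_mconj hq hP hQ hlam]

end

/-- For a bipartition `λ` of `n`, `w(λ) = w(λ')`. -/
theorem weight_conj_bipartition {K : Type*} [Field K] (q : K) (hq0 : q ≠ 0) (hq1 : q ≠ 1)
    (a : Fin 2 → ℤ) (Q : Fin 2 → K) (hQ : ∀ k, Q k = q ^ a k)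
    {n : ℕ} (lam : Fin 2 → ℕ → ℕ) (hlam : IsMultipartition lam) (hn : msize lam = n) :
    mweight q Q lam = mweight q Q (mconj lam) := by
  have hP : Q 0 * Q 1 ≠ 0 := by simp [hQ, zpow_ne_zero, hq0]
  exact weight_conj_bipartition_general hq0 hP (Fin.forall_fin_two.2 ⟨rfl, mul_comm _ _⟩) hlam
end

section
/- Let K be a field and q ∈ K^× an element of quantum characteristic 9 (i.e. 1 + q + ⋯ + q⁸ = 0 and 1 + q + ⋯ + q^{m−1} ≠ 0 for 1 ≤ m < 9). Set r = 4 and (Q₁, Q₂, Q₃, Q₄) = (q, q, q⁵, q²). For the 4-partition λ = ((3, 3, 2), (2, 1), (1,1,1,1,1,1), (2, 2, 1)) of 22, one has w(λ) = 1 and w(λ') = 6, where λ' is the conjugate 4-partition; in particular w(λ) ≠ w(λ'). -/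
open scoped BigOperators

/-!
When every `Q_k` is an integer power of `q` and `q` is a primitive `e`-th root of unity, all
residues are powers of `q`, so residues may be replaced by their exponents in `ℤ/eℤ` and the weight
becomes a finite count of exponents. Having quantum characteristic `9` makes `q` a primitive ninth
root of unity: the only other possibility is `q = 1` in characteristic `9`, and `9` is not prime.
It remains to count the exponents in the diagrams of `λ` and of its conjugate.
-/

section QuantumCharacteristic

variable {R : Type*} {q : R} {e : ℕ}

theorem ne_one_of_geom_sum_eq_zero_of_not_prime [Semiring R] [NoZeroDivisors R] (he2 : 2 ≤ e)
    (hep : ¬ e.Prime) (he : ∑ i ∈ Finset.range e, q ^ i = 0)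
    (hmin : ∀ m : ℕ, 1 ≤ m → m < e → ∑ i ∈ Finset.range m, q ^ i ≠ 0) : q ≠ 1 := by
  rintro rfl
  simp only [one_pow, Finset.sum_const, Finset.card_range, nsmul_one] at he hmin
  obtain ⟨a, b, ha, hb, rfl⟩ := (Nat.not_prime_iff_exists_mul_eq he2).1 hep
  have ha0 : 1 ≤ a := Nat.pos_of_ne_zero (by rintro rfl; simp at he2)
  have hb0 : 1 ≤ b := Nat.pos_of_ne_zero (by rintro rfl; simp at he2)
  rw [Nat.cast_mul] at he
  exact (mul_eq_zero.1 he).elim (hmin a ha0 ha) (hmin b hb0 hb)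

theorem isPrimitiveRoot_of_geom_sum_eq_zero [CommRing R] [NoZeroDivisors R] (he0 : 0 < e)
    (hq1 : q ≠ 1) (he : ∑ i ∈ Finset.range e, q ^ i = 0)
    (hmin : ∀ m : ℕ, 1 ≤ m → m < e → ∑ i ∈ Finset.range m, q ^ i ≠ 0) :
    IsPrimitiveRoot q e := by
  have pow_eq_one_iff (m : ℕ) : q ^ m = 1 ↔ ∑ i ∈ Finset.range m, q ^ i = 0 := by
    rw [← sub_eq_zero, ← geom_sum_mul, mul_eq_zero_iff_right (sub_ne_zero.2 hq1)]
  exact (IsPrimitiveRoot.iff he0).2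
    ⟨(pow_eq_one_iff e).2 he, fun m hm0 hme hm => hmin m hm0 hme ((pow_eq_one_iff m).1 hm)⟩

end QuantumCharacteristic

section PrimitiveRootPowers

variable {G₀ : Type*} [CommGroupWithZero G₀] {q : G₀} {e : ℕ}

theorem zpow_eq_zpow_iff_intCast_eq (hq0 : q ≠ 0) (hq : IsPrimitiveRoot q e) (m n : ℤ) :
    q ^ m = q ^ n ↔ (m : ZMod e) = n := by
  rw [eq_comm (a := q ^ m), ← div_eq_one_iff_eq (zpow_ne_zero m hq0), ← zpow_sub₀ hq0,
    hq.zpow_eq_one_iff_dvd, ZMod.intCast_eq_intCast_iff_dvd_sub]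

theorem finsum_mem_ne_zero_eq_finsum_zmod {M : Type*} [AddCommMonoid M] (hq0 : q ≠ 0)
    (hq : IsPrimitiveRoot q e) {g : G₀ → M} (hg : ∀ f, (∀ n : ℤ, f ≠ q ^ n) → g f = 0) :
    ∑ᶠ f ∈ {f : G₀ | f ≠ 0}, g f = ∑ᶠ c : ZMod e, g (q ^ (c.cast : ℤ)) := by
  have zpow_cast_injective : Function.Injective fun c : ZMod e => q ^ (c.cast : ℤ) :=
    fun c d hcd => by simpa using (zpow_eq_zpow_iff_intCast_eq hq0 hq _ _).1 hcd
  rw [← finsum_mem_range zpow_cast_injective]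
  refine finsum_mem_inter_support_eq' _ _ _ fun f hf => ⟨fun _ => ?_, ?_⟩
  · obtain ⟨n, rfl⟩ : ∃ n : ℤ, f = q ^ n := by
      by_contra! hfq
      exact hf (hg f hfq)
    exact ⟨n, (zpow_eq_zpow_iff_intCast_eq hq0 hq _ _).2 (ZMod.intCast_zmod_cast _)⟩
  · rintro ⟨c, rfl⟩
    exact zpow_ne_zero _ hq0

end PrimitiveRootPowers

section YoungDiagrams

theorem rowLen_ofRowLens_eq_getD (w : List ℕ) (hw : w.SortedGE) (i : ℕ) :
    (YoungDiagram.ofRowLens w hw).rowLen i = w.getD i 0 := by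
  refine eq_of_forall_lt_iff fun j => ?_
  rw [← YoungDiagram.mem_iff_lt_rowLen, YoungDiagram.mem_ofRowLens]
  by_cases hi : i < w.length <;> simp [hi]

theorem conjParts_rowLen (μ : YoungDiagram) : conjParts μ.rowLen = μ.transpose.rowLen := by
  funext j
  have rows_longer_eq : {i : ℕ | j < μ.rowLen i} = ↑(Finset.range (μ.colLen j)) := by
    ext i
    simp [← YoungDiagram.mem_iff_lt_rowLen, YoungDiagram.mem_iff_lt_colLen]
  rw [conjParts, rows_longer_eq, Set.ncard_coe_finset, Finset.card_range,
    YoungDiagram.rowLen_transpose]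

variable {r : ℕ}

/-- The conjugate of an `r`-partition given as a tuple of Mathlib's Young diagrams. -/
def multiTranspose (μ : Fin r → YoungDiagram) (k : Fin r) : YoungDiagram :=
  (μ k.rev).transpose

theorem mconj_rowLen (μ : Fin r → YoungDiagram) :
    mconj (fun k => (μ k).rowLen) = fun k => (multiTranspose μ k).rowLen :=
  funext fun k => conjParts_rowLen (μ k.rev)

/-- The Young diagram of an `r`-partition as a finset, for an `r`-partition given as a tuple of
Mathlib's Young diagrams; it makes counting nodes decidable. -/
def multiCells (μ : Fin r → YoungDiagram) : Finset (ℕ × ℕ × Fin r) :=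
  Finset.univ.biUnion fun k => (μ k).cells.image fun p => (p.1, p.2, k)

theorem coe_multiCells (μ : Fin r → YoungDiagram) :
    (multiCells μ : Set (ℕ × ℕ × Fin r)) = mDiagram fun k => (μ k).rowLen := by
  ext ⟨i, j, k⟩
  simp [multiCells, mDiagram, ← YoungDiagram.mem_iff_lt_rowLen]

end YoungDiagrams

section ResidueExponents

variable {r : ℕ} {e : ℕ}

/-- The exponent of the residue of a node when `Q k = q ^ a k`. It is taken in `ZMod e`, the
exponent of a primitive `e`-th root of unity `q` being defined only modulo `e`. -/
def residueExponent (e : ℕ) (a : Fin r → ℤ) (x : ℕ × ℕ × Fin r) : ZMod e :=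
  x.2.1 - x.1 + a x.2.2

/-- The combinatorial form of `c_f(λ)`: the number of nodes with residue exponent `c`. -/
def exponentCount (a : Fin r → ℤ) (μ : Fin r → YoungDiagram) (c : ZMod e) : ℕ :=
  ((multiCells μ).filter fun x => residueExponent e a x = c).card

variable {K : Type*} [Field K] {q : K}

theorem res_eq_zpow (hq0 : q ≠ 0) (a : Fin r → ℤ) (x : ℕ × ℕ × Fin r) :
    res q (fun k => q ^ a k) x = q ^ ((x.2.1 : ℤ) - x.1 + a x.2.2) :=
  (zpow_add₀ hq0 _ _).symm

theorem res_eq_zpow_iff (hq0 : q ≠ 0) (hq : IsPrimitiveRoot q e) (a : Fin r → ℤ)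
    (x : ℕ × ℕ × Fin r) (n : ℤ) :
    res q (fun k => q ^ a k) x = q ^ n ↔ residueExponent e a x = n := by
  rw [res_eq_zpow hq0, zpow_eq_zpow_iff_intCast_eq hq0 hq, residueExponent]
  simp only [Int.cast_add, Int.cast_sub, Int.cast_natCast]

theorem resCount_eq_zero_of_forall_ne_zpow (hq0 : q ≠ 0) (a : Fin r → ℤ) (lam : Fin r → ℕ → ℕ)
    {f : K} (hf : ∀ n : ℤ, f ≠ q ^ n) : resCount q (fun k => q ^ a k) lam f = 0 := by
  have no_node_of_residue : {x ∈ mDiagram lam | res q (fun k => q ^ a k) x = f} = ∅ :=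
    Set.eq_empty_of_forall_notMem fun x hx => hf _ (hx.2.symm.trans (res_eq_zpow hq0 a x))
  rw [resCount, no_node_of_residue, Set.ncard_empty]

theorem resCount_zpow (hq0 : q ≠ 0) (hq : IsPrimitiveRoot q e) (a : Fin r → ℤ)
    (μ : Fin r → YoungDiagram) (n : ℤ) :
    resCount q (fun k => q ^ a k) (fun k => (μ k).rowLen) (q ^ n) =
      exponentCount a μ (n : ZMod e) := by
  simp only [resCount, res_eq_zpow_iff hq0 hq, exponentCount, ← coe_multiCells,
    ← Set.ncard_coe_finset, Finset.coe_filter, Finset.mem_coe]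

theorem mweight_rowLen (hq0 : q ≠ 0) (hq : IsPrimitiveRoot q e) (a : Fin r → ℤ)
    (μ : Fin r → YoungDiagram) :
    mweight q (fun k => q ^ a k) (fun k => (μ k).rowLen) =
      (∑ k, (exponentCount a μ (a k : ZMod e) : ℚ)) -
        (1 / 2) * ∑ᶠ c : ZMod e, ((exponentCount a μ c : ℚ) - exponentCount a μ (c + 1)) ^ 2 := by
  have mul_ne_zpow {f : K} (hf : ∀ n : ℤ, f ≠ q ^ n) (n : ℤ) : q * f ≠ q ^ n := fun h =>
    hf (n - 1) (by rw [zpow_sub_one₀ hq0, ← h, mul_comm q, mul_inv_cancel_right₀ hq0])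
  have mul_zpow_cast (c : ZMod e) : q * q ^ (c.cast : ℤ) = q ^ ((c.cast : ℤ) + 1) := by
    rw [zpow_add_one₀ hq0, mul_comm]
  rw [mweight, finsum_mem_ne_zero_eq_finsum_zmod hq0 hq]
  · simp only [mul_zpow_cast, resCount_zpow hq0 hq, Int.cast_add, Int.cast_one,
      ZMod.intCast_zmod_cast, Int.cast_natCast]
  · intro f hf
    simp [resCount_eq_zero_of_forall_ne_zpow hq0 a _ hf,
      resCount_eq_zero_of_forall_ne_zpow hq0 a _ (mul_ne_zpow hf)]

end ResidueExponents

section Example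

/-- The exponents `a_k` of `(Q₁, Q₂, Q₃, Q₄) = (q, q, q⁵, q²)`. -/
def exampleCharge : Fin 4 → ℤ := ![1, 1, 5, 2]

/-- The `4`-partition `λ` of the example, as a tuple of lists of row lengths. -/
def exampleRows : Fin 4 → List ℕ := ![[3, 3, 2], [2, 1], [1, 1, 1, 1, 1, 1], [2, 2, 1]]

theorem sortedGE_exampleRows (k : Fin 4) : (exampleRows k).SortedGE := by
  decide +revert

/-- The `4`-partition `λ` of the example, as a tuple of Young diagrams. -/
def exampleShape (k : Fin 4) : YoungDiagram :=
  YoungDiagram.ofRowLens (exampleRows k) (sortedGE_exampleRows k)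

theorem exponentCount_exampleShape (c : ZMod 9) :
    exponentCount exampleCharge exampleShape c =
      (![5, 5, 6, 3, 1, 1, 0, 0, 1] : Fin 9 → ℕ) c := by
  fin_cases c <;> decide +kernel

theorem exponentCount_multiTranspose_exampleShape (c : ZMod 9) :
    exponentCount exampleCharge (multiTranspose exampleShape) c =
      (![2, 5, 4, 4, 3, 2, 2, 0, 0] : Fin 9 → ℕ) c := by
  fin_cases c <;> decide +kernel

variable {K : Type*} [Field K] {q : K}

theorem mweight_exampleShape (hq0 : q ≠ 0) (hq : IsPrimitiveRoot q 9) :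
    mweight q (fun k => q ^ exampleCharge k) (fun k => (exampleShape k).rowLen) = 1 := by
  have sum_count : ∑ k, (exponentCount exampleCharge exampleShape
      (exampleCharge k : ZMod 9) : ℚ) = 17 := by
    simp only [exponentCount_exampleShape]
    decide +kernel
  have sum_sq_diff : ∑ c : ZMod 9, ((exponentCount exampleCharge exampleShape c : ℚ) -
      exponentCount exampleCharge exampleShape (c + 1)) ^ 2 = 32 := by
    simp only [exponentCount_exampleShape]
    decide +kernel
  rw [mweight_rowLen hq0 hq, finsum_eq_sum_of_fintype, sum_count, sum_sq_diff]
  norm_num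

theorem mweight_mconj_exampleShape (hq0 : q ≠ 0) (hq : IsPrimitiveRoot q 9) :
    mweight q (fun k => q ^ exampleCharge k) (mconj fun k => (exampleShape k).rowLen) = 6 := by
  have sum_count : ∑ k, (exponentCount exampleCharge (multiTranspose exampleShape)
      (exampleCharge k : ZMod 9) : ℚ) = 16 := by
    simp only [exponentCount_multiTranspose_exampleShape]
    decide +kernel
  have sum_sq_diff : ∑ c : ZMod 9,
      ((exponentCount exampleCharge (multiTranspose exampleShape) c : ℚ) -
        exponentCount exampleCharge (multiTranspose exampleShape) (c + 1)) ^ 2 = 20 := by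
    simp only [exponentCount_multiTranspose_exampleShape]
    decide +kernel
  rw [mconj_rowLen, mweight_rowLen hq0 hq, finsum_eq_sum_of_fintype, sum_count, sum_sq_diff]
  norm_num

end Example

/-- with `e = 9`, `r = 4`, `(Q₁,Q₂,Q₃,Q₄) = (q, q, q⁵, q²)` and
`λ = ((3,3,2), (2,1), (1⁶), (2,2,1))`, one has `w(λ) = 1`, `w(λ') = 6`,
and in particular `w(λ) ≠ w(λ')`. -/
theorem weight_ne_weight_conj_example {K : Type*} [Field K] (q : K) (hq0 : q ≠ 0)
    (he : ∑ i ∈ Finset.range 9, q ^ i = 0)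
    (hmin : ∀ m : ℕ, 1 ≤ m → m < 9 → ∑ i ∈ Finset.range m, q ^ i ≠ 0)
    (Q : Fin 4 → K) (hQ : Q = ![q, q, q ^ (5 : ℕ), q ^ (2 : ℕ)])
    (lam : Fin 4 → ℕ → ℕ)
    (hlamdef : lam = fun k i =>
      (![[3, 3, 2], [2, 1], [1, 1, 1, 1, 1, 1], [2, 2, 1]] k).getD i 0) :
    mweight q Q lam = 1 ∧ mweight q Q (mconj lam) = 6 ∧
      mweight q Q lam ≠ mweight q Q (mconj lam) := by
  have hq : IsPrimitiveRoot q 9 := isPrimitiveRoot_of_geom_sum_eq_zero (by norm_num)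
    (ne_one_of_geom_sum_eq_zero_of_not_prime (by norm_num) (by norm_num) he hmin) he hmin
  have hQ_zpow : Q = fun k => q ^ exampleCharge k := by
    rw [hQ]
    funext k
    fin_cases k <;> simp [exampleCharge]
  have hlam : lam = fun k => (exampleShape k).rowLen := by
    rw [hlamdef]
    funext k i
    exact (rowLen_ofRowLens_eq_getD _ (sortedGE_exampleRows k) i).symm
  have weight_eq : mweight q Q lam = 1 := by
    rw [hQ_zpow, hlam, mweight_exampleShape hq0 hq]
  have weight_conj_eq : mweight q Q (mconj lam) = 6 := by
    rw [hQ_zpow, hlam, mweight_mconj_exampleShape hq0 hq]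
  exact ⟨weight_eq, weight_conj_eq, by rw [weight_eq, weight_conj_eq]; norm_num⟩
end
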